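/- Let D ≥ 1, β, x ∈ ℝ^D, y ∈ {0,1}, and δ ≥ 0, and let ℓ(u) = −y·log σ(β·u) − (1−y)·log(1 − σ(β·u)) with σ(t) = 1/(1+e^{−t}). Then the gradient of ℓ at x equals (σ(β·x) − y)·β, and for every coordinate i one has sign((σ(β·x) − y)·β_i) = (1−2y)·sign(β_i). Consequently, the FGSM perturbation λ* = δ·sign(∇_x ℓ(x)) (sign applied componentwise) satisfies ‖λ*‖∞ ≤ δ and maximizes ℓ(x + λ) over all λ ∈ ℝ^D with ‖λ‖∞ ≤ δ. -/

import Mathlib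

/-- The logistic sigmoid `σ(t) = 1/(1+e^{-t})`. -/
noncomputable def sigmoid (t : ℝ) : ℝ := 1 / (1 + Real.exp (-t))

/-!
For a generalised linear model `u ↦ φ (β ⬝ᵥ u)` every gradient is a scalar multiple `c • β` of the
weight vector. By the duality of the `ℓ¹` and `ℓ∞` norms, `δ • sign (c • β)` maximizes the linear
form `l ↦ c * (β ⬝ᵥ l)` on the `ℓ∞` ball of radius `δ`. When `φ` is monotone in the direction of the
sign of `c`, the first-order maximizer is therefore an exact maximizer. The logistic loss has this
property: its derivative `σ t - y` in the score `t` has the same sign for all `t` once the label `y`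
is `0` or `1`, because `0 < σ t < 1`.
-/

section Sign

theorem real_sign_eq_coe_sign (r : ℝ) : Real.sign r = (SignType.sign r : ℝ) := by
  rcases lt_trichotomy r 0 with hr | rfl | hr
  · simp [Real.sign_of_neg hr, sign_neg hr]
  · simp
  · simp [Real.sign_of_pos hr, sign_pos hr]

theorem real_sign_mul (r s : ℝ) : Real.sign (r * s) = Real.sign r * Real.sign s := by
  simp [real_sign_eq_coe_sign, sign_mul]

theorem mul_real_sign (r : ℝ) : r * Real.sign r = |r| := by
  rw [real_sign_eq_coe_sign, self_mul_sign]

theorem abs_real_sign_le_one (r : ℝ) : |Real.sign r| ≤ 1 := by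
  rcases Real.sign_apply_eq r with h | h | h <;> simp [h]

end Sign

section Fgsm

variable {ι : Type*}

/-- The fast gradient sign perturbation of size `δ` for a loss whose gradient is `g`,
the direction of steepest ascent of that loss for the `ℓ∞` norm. -/
noncomputable def fgsmPerturbation (δ : ℝ) (g : ι → ℝ) : ι → ℝ :=
  fun i => δ * Real.sign (g i)

variable [Fintype ι]

theorem norm_fgsmPerturbation_le {δ : ℝ} (hδ : 0 ≤ δ) (g : ι → ℝ) :
    ‖fgsmPerturbation δ g‖ ≤ δ := by
  refine (pi_norm_le_iff_of_nonneg hδ).mpr fun i => ?_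
  rw [fgsmPerturbation, Real.norm_eq_abs, abs_mul, abs_of_nonneg hδ]
  exact mul_le_of_le_one_right hδ (abs_real_sign_le_one (g i))

theorem dotProduct_fgsmPerturbation (δ : ℝ) (g : ι → ℝ) :
    g ⬝ᵥ fgsmPerturbation δ g = (∑ i, |g i|) * δ := by
  simp only [dotProduct, fgsmPerturbation, Finset.sum_mul, ← mul_real_sign, mul_assoc,
    mul_comm δ]

theorem dotProduct_le_sum_abs_mul_norm (g l : ι → ℝ) : g ⬝ᵥ l ≤ (∑ i, |g i|) * ‖l‖ := by
  rw [dotProduct, Finset.sum_mul]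
  refine Finset.sum_le_sum fun i _ => ?_
  calc
    g i * l i ≤ |g i| * |l i| := (le_abs_self _).trans_eq (abs_mul _ _)
    _ ≤ |g i| * ‖l‖ := mul_le_mul_of_nonneg_left (norm_le_pi_norm l i) (abs_nonneg _)

theorem dotProduct_le_dotProduct_fgsmPerturbation {δ : ℝ} {l : ι → ℝ} (hl : ‖l‖ ≤ δ)
    (g : ι → ℝ) : g ⬝ᵥ l ≤ g ⬝ᵥ fgsmPerturbation δ g :=
  calc
    g ⬝ᵥ l ≤ (∑ i, |g i|) * ‖l‖ := dotProduct_le_sum_abs_mul_norm g l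
    _ ≤ (∑ i, |g i|) * δ := by gcongr
    _ = g ⬝ᵥ fgsmPerturbation δ g := (dotProduct_fgsmPerturbation δ g).symm

end Fgsm

section GeneralizedLinear

variable {ι : Type*} [Fintype ι] {φ : ℝ → ℝ} {c δ : ℝ} {l : ι → ℝ}

theorem hasFDerivAt_comp_dotProduct {β x : ι → ℝ} (hφ : HasDerivAt φ c (β ⬝ᵥ x)) :
    HasFDerivAt (fun u => φ (β ⬝ᵥ u))
      (∑ i, (c * β i) • (ContinuousLinearMap.proj i : (ι → ℝ) →L[ℝ] ℝ)) x := by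
  have hβ : HasFDerivAt (fun u => β ⬝ᵥ u)
      (∑ i, β i • (ContinuousLinearMap.proj i : (ι → ℝ) →L[ℝ] ℝ)) x :=
    HasFDerivAt.fun_sum fun i _ => (hasFDerivAt_apply i x).const_mul (β i)
  simpa only [Finset.smul_sum, smul_smul] using! hφ.comp_hasFDerivAt x hβ

theorem comp_dotProduct_add_le_of_monotone (hφ : Monotone φ) (hc : 0 < c) (hl : ‖l‖ ≤ δ)
    (β x : ι → ℝ) :
    φ (β ⬝ᵥ (x + l)) ≤ φ (β ⬝ᵥ (x + fgsmPerturbation δ (c • β))) := by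
  have h : c * (β ⬝ᵥ l) ≤ c * (β ⬝ᵥ fgsmPerturbation δ (c • β)) := by
    simpa only [smul_dotProduct, smul_eq_mul] using
      dotProduct_le_dotProduct_fgsmPerturbation hl (c • β)
  simp only [dotProduct_add]
  exact hφ (by gcongr; exact le_of_mul_le_mul_left h hc)

theorem comp_dotProduct_add_le_of_antitone (hφ : Antitone φ) (hc : c < 0) (hl : ‖l‖ ≤ δ)
    (β x : ι → ℝ) :
    φ (β ⬝ᵥ (x + l)) ≤ φ (β ⬝ᵥ (x + fgsmPerturbation δ (c • β))) := by
  have hφ_neg : Monotone fun t => φ (-t) := fun _ _ hst => hφ (neg_le_neg hst)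
  simpa only [neg_dotProduct, neg_smul_neg, neg_neg] using
    comp_dotProduct_add_le_of_monotone hφ_neg (neg_pos.mpr hc) hl (-β) x

end GeneralizedLinear

section LogisticLoss

theorem sigmoid_eq_real_sigmoid : sigmoid = Real.sigmoid :=
  funext fun _ => one_div _

theorem sigmoid_pos (t : ℝ) : 0 < sigmoid t :=
  sigmoid_eq_real_sigmoid ▸ Real.sigmoid_pos t

theorem sigmoid_lt_one (t : ℝ) : sigmoid t < 1 :=
  sigmoid_eq_real_sigmoid ▸ Real.sigmoid_lt_one t

theorem hasDerivAt_sigmoid (t : ℝ) : HasDerivAt sigmoid (sigmoid t * (1 - sigmoid t)) t :=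
  sigmoid_eq_real_sigmoid ▸ Real.hasDerivAt_sigmoid t

/-- The logistic (cross-entropy) loss of the score `t` against the label `y`. The label is a real
number, so that soft labels are included. -/
noncomputable def logisticLoss (y t : ℝ) : ℝ :=
  -y * Real.log (sigmoid t) - (1 - y) * Real.log (1 - sigmoid t)

theorem hasDerivAt_logisticLoss (y t : ℝ) :
    HasDerivAt (logisticLoss y) (sigmoid t - y) t := by
  have hσ : sigmoid t ≠ 0 := (sigmoid_pos t).ne'
  have hσ' : 1 - sigmoid t ≠ 0 := (sub_pos.mpr (sigmoid_lt_one t)).ne'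
  have hlog := (hasDerivAt_sigmoid t).log hσ
  have hlog' := ((hasDerivAt_sigmoid t).const_sub 1).log hσ'
  refine ((hlog.const_mul (-y)).sub (hlog'.const_mul (1 - y))).congr_deriv ?_
  field

variable {y : ℝ}

theorem monotone_logisticLoss (hy : y ≤ 0) : Monotone (logisticLoss y) :=
  monotone_of_hasDerivAt_nonneg (hasDerivAt_logisticLoss y)
    fun t => sub_nonneg.mpr (hy.trans (sigmoid_pos t).le)

theorem antitone_logisticLoss (hy : 1 ≤ y) : Antitone (logisticLoss y) :=
  antitone_of_hasDerivAt_nonpos (hasDerivAt_logisticLoss y)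
    fun t => sub_nonpos.mpr ((sigmoid_lt_one t).le.trans hy)

theorem real_sign_sigmoid_sub (hy : y = 0 ∨ y = 1) (t : ℝ) :
    Real.sign (sigmoid t - y) = 1 - 2 * y := by
  rcases hy with rfl | rfl
  · rw [Real.sign_of_pos (sub_pos.mpr (sigmoid_pos t))]
    norm_num
  · rw [Real.sign_of_neg (sub_neg.mpr (sigmoid_lt_one t))]
    norm_num

theorem logisticLoss_dotProduct_add_le {ι : Type*} [Fintype ι] {δ : ℝ} {l : ι → ℝ}
    (hy : y ≤ 0 ∨ 1 ≤ y) (hl : ‖l‖ ≤ δ) (β x : ι → ℝ) :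
    logisticLoss y (β ⬝ᵥ (x + l)) ≤
      logisticLoss y (β ⬝ᵥ (x + fgsmPerturbation δ ((sigmoid (β ⬝ᵥ x) - y) • β))) := by
  rcases hy with hy | hy
  · have hc : 0 < sigmoid (β ⬝ᵥ x) - y := sub_pos.mpr (hy.trans_lt (sigmoid_pos _))
    exact comp_dotProduct_add_le_of_monotone (monotone_logisticLoss hy) hc hl β x
  · have hc : sigmoid (β ⬝ᵥ x) - y < 0 := sub_neg.mpr ((sigmoid_lt_one _).trans_le hy)
    exact comp_dotProduct_add_le_of_antitone (antitone_logisticLoss hy) hc hl β x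

end LogisticLoss

/-- FGSM is exact for logistic regression: the gradient of the logistic loss
`ℓ(u) = -y log σ(β·u) - (1-y) log(1-σ(β·u))` at `x` is `(σ(β·x) - y)·β` (stated via the
Fréchet derivative `v ↦ ∑ i, (σ(β·x) - y)β_i v_i`), its componentwise sign equals
`(1-2y) sign(β_i)`, and the FGSM perturbation `λ* = δ · sign(∇ℓ(x))` lies in the ℓ∞ ball of
radius `δ` and maximizes `ℓ(x+λ)` over all `λ` with `‖λ‖∞ ≤ δ`.
Here `Fin D → ℝ` carries the sup (ℓ∞) norm. -/
theorem fgsm_exact_logreg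
    (D : ℕ) (hD : 1 ≤ D) (β x : Fin D → ℝ) (y δ : ℝ) (hy : y = 0 ∨ y = 1) (hδ : 0 ≤ δ)
    (ℓ : (Fin D → ℝ) → ℝ)
    (hℓ : ℓ = fun u => -y * Real.log (sigmoid (∑ i, β i * u i))
        - (1 - y) * Real.log (1 - sigmoid (∑ i, β i * u i)))
    (lstar : Fin D → ℝ)
    (hl : lstar = fun i => δ * Real.sign ((sigmoid (∑ j, β j * x j) - y) * β i)) :
    HasFDerivAt ℓ
      (∑ i, ((sigmoid (∑ j, β j * x j) - y) * β i) •
        (ContinuousLinearMap.proj i : (Fin D → ℝ) →L[ℝ] ℝ)) x ∧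
    (∀ i, Real.sign ((sigmoid (∑ j, β j * x j) - y) * β i) = (1 - 2 * y) * Real.sign (β i)) ∧
    ‖lstar‖ ≤ δ ∧
    ∀ l : Fin D → ℝ, ‖l‖ ≤ δ → ℓ (x + l) ≤ ℓ (x + lstar) := by
  obtain rfl : ℓ = fun u => logisticLoss y (β ⬝ᵥ u) := hℓ
  obtain rfl : lstar = fgsmPerturbation δ ((sigmoid (β ⬝ᵥ x) - y) • β) := hl
  refine ⟨hasFDerivAt_comp_dotProduct (hasDerivAt_logisticLoss y _), fun i => ?_,
    norm_fgsmPerturbation_le hδ _, fun l hl => ?_⟩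
  · rw [real_sign_mul, real_sign_sigmoid_sub hy]
  · exact logisticLoss_dotProduct_add_le (hy.imp le_of_eq ge_of_eq) hl β x
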